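/- arXiv:2309.03439 — 5 statements merged into one kernel-verified Lean document; each statement's English description precedes it below -/
import Mathlib

section
/- Let U₁ ∈ ℝ^{m₁×g₁}, U₂ ∈ ℝ^{m₂×g₂}, V₁ ∈ ℝ^{m₁×l₁}, V₂ ∈ ℝ^{m₂×l₂} be matrices whose columns are orthonormal (U₁ᵀU₁ = I, U₂ᵀU₂ = I, V₁ᵀV₁ = I, V₂ᵀV₂ = I). Then the following are equivalent: (i) for every C_G ∈ ℝ^{g₁×g₂} and every C_L ∈ ℝ^{l₁×l₂}, the Frobenius inner product ⟨U₁ C_G U₂ᵀ, V₁ C_L V₂ᵀ⟩ = Tr((U₁ C_G U₂ᵀ)ᵀ (V₁ C_L V₂ᵀ)) equals 0; (ii) U₁ᵀV₁ = 0 or U₂ᵀV₂ = 0. -/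
/-!
By cyclicity of the trace, the Frobenius inner product equals
`Tr (C_Gᵀ (U₁ᵀ V₁) C_L (U₂ᵀ V₂)ᵀ)` (`trace_tucker_inner`). It therefore vanishes if either
`U₁ᵀ V₁` or `U₂ᵀ V₂` does. Conversely, taking both cores to be matrix units gives the product of
an arbitrary entry of `U₁ᵀ V₁` with an arbitrary entry of `U₂ᵀ V₂`, so if all these products
vanish then one of the two matrices is zero.
-/

open Matrix

/-- Mode-wise form of the Frobenius inner product: by cyclicity of the trace it depends on the
factors only through `U₁ᵀ * V₁` and `U₂ᵀ * V₂`. -/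
lemma trace_tucker_inner {m₁ m₂ g₁ g₂ l₁ l₂ : ℕ}
    (U₁ : Matrix (Fin m₁) (Fin g₁) ℝ) (U₂ : Matrix (Fin m₂) (Fin g₂) ℝ)
    (V₁ : Matrix (Fin m₁) (Fin l₁) ℝ) (V₂ : Matrix (Fin m₂) (Fin l₂) ℝ)
    (CG : Matrix (Fin g₁) (Fin g₂) ℝ) (CL : Matrix (Fin l₁) (Fin l₂) ℝ) :
    Matrix.trace ((U₁ * CG * U₂ᵀ)ᵀ * (V₁ * CL * V₂ᵀ)) =
      Matrix.trace (CGᵀ * (U₁ᵀ * V₁) * CL * (U₂ᵀ * V₂)ᵀ) := by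
  simp only [transpose_mul, transpose_transpose, Matrix.mul_assoc]
  rw [Matrix.trace_mul_comm]
  simp only [Matrix.mul_assoc]

/-- Proposition 1 (two-mode case): for matrices with orthonormal columns, the global
reconstruction `U₁ C_G U₂ᵀ` is Frobenius-orthogonal to the local reconstruction
`V₁ C_L V₂ᵀ` for all cores iff the factor matrices are orthogonal in at least one mode. -/
theorem perTucker_orthogonality_equiv {m₁ m₂ g₁ g₂ l₁ l₂ : ℕ}
    (U₁ : Matrix (Fin m₁) (Fin g₁) ℝ) (U₂ : Matrix (Fin m₂) (Fin g₂) ℝ)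
    (V₁ : Matrix (Fin m₁) (Fin l₁) ℝ) (V₂ : Matrix (Fin m₂) (Fin l₂) ℝ)
    (hU₁ : U₁ᵀ * U₁ = 1) (hU₂ : U₂ᵀ * U₂ = 1)
    (hV₁ : V₁ᵀ * V₁ = 1) (hV₂ : V₂ᵀ * V₂ = 1) :
    (∀ (CG : Matrix (Fin g₁) (Fin g₂) ℝ) (CL : Matrix (Fin l₁) (Fin l₂) ℝ),
        Matrix.trace ((U₁ * CG * U₂ᵀ)ᵀ * (V₁ * CL * V₂ᵀ)) = 0) ↔
      (U₁ᵀ * V₁ = 0 ∨ U₂ᵀ * V₂ = 0) := by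
  simp only [trace_tucker_inner]
  constructor
  · intro h
    by_contra! hne
    obtain ⟨h₁, h₂⟩ := hne
    -- Cores supported on one entry isolate the product of an entry of `U₁ᵀ * V₁` and an entry
    -- of `U₂ᵀ * V₂`; pick both entries nonzero.
    obtain ⟨i, j, hij⟩ : ∃ i j, (U₁ᵀ * V₁) i j ≠ 0 := by
      by_contra! h0
      exact h₁ (Matrix.ext h0)
    obtain ⟨p, q, hpq⟩ : ∃ p q, (U₂ᵀ * V₂) p q ≠ 0 := by
      by_contra! h0
      exact h₂ (Matrix.ext h0)
    have key := h (single i p 1) (single j q 1)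
    rw [transpose_single, single_mul_mul_single, trace_single_mul, transpose_apply, one_mul,
      mul_one] at key
    exact mul_ne_zero hij hpq key
  · rintro (h | h) CG CL <;> simp only [h, Matrix.mul_zero, Matrix.zero_mul, transpose_zero, trace_zero]
end

section
/- Let U₁ ∈ ℝ^{m₁×g₁}, U₂ ∈ ℝ^{m₂×g₂}, V₁ ∈ ℝ^{m₁×l₁}, V₂ ∈ ℝ^{m₂×l₂} have orthonormal columns, and assume U₁ᵀV₁ = 0. Let Y ∈ ℝ^{m₁×m₂}, and set C_G* = U₁ᵀ Y U₂ and C_L* = V₁ᵀ Y V₂. Then for all C_G ∈ ℝ^{g₁×g₂} and C_L ∈ ℝ^{l₁×l₂}, ‖Y − U₁ C_G* U₂ᵀ − V₁ C_L* V₂ᵀ‖_F ≤ ‖Y − U₁ C_G U₂ᵀ − V₁ C_L V₂ᵀ‖_F. -/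
/-!
This is the Pythagorean theorem in the Frobenius inner product `⟪A, B⟫ = tr (Aᵀ * B)`. The
projected cores make the residual `R` satisfy the normal equations `U₁ᵀ * R * U₂ = 0` and
`V₁ᵀ * R * V₂ = 0`: the cross terms vanish because `U₁ᵀ * V₁ = 0`. By cyclicity of the trace
(`trace_cross_eq_zero`), `R` is then orthogonal to every `U₁ * A * U₂ᵀ` and `V₁ * B * V₂ᵀ`, and
any other choice of cores changes the residual by a sum of two such matrices, which can only
increase its norm (`frobNorm_le_of_orthogonal`).
-/

open Matrix

/-- Frobenius norm of a real matrix. -/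
noncomputable def frobNorm {m n : ℕ} (A : Matrix (Fin m) (Fin n) ℝ) : ℝ :=
  Real.sqrt (∑ i, ∑ j, (A i j) ^ 2)

lemma trace_transpose_mul_eq_sum {m n : ℕ} (A B : Matrix (Fin m) (Fin n) ℝ) :
    (Aᵀ * B).trace = ∑ i, ∑ j, A i j * B i j := by
  rw [Finset.sum_comm]
  simp [Matrix.trace, Matrix.mul_apply]

lemma frobNorm_le_of_orthogonal {m n : ℕ} (R D : Matrix (Fin m) (Fin n) ℝ)
    (h : (Rᵀ * D).trace = 0) : frobNorm R ≤ frobNorm (R + D) := by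
  rw [trace_transpose_mul_eq_sum] at h
  have key : ∑ i, ∑ j, ((R + D) i j) ^ 2
      = ∑ i, ∑ j, (R i j) ^ 2 + 2 * ∑ i, ∑ j, R i j * D i j + ∑ i, ∑ j, (D i j) ^ 2 := by
    simp only [Finset.mul_sum, ← Finset.sum_add_distrib, Matrix.add_apply]
    refine Finset.sum_congr rfl fun i _ => Finset.sum_congr rfl fun j _ => ?_
    ring
  have hD : 0 ≤ ∑ i, ∑ j, (D i j) ^ 2 := by positivity
  unfold frobNorm
  apply Real.sqrt_le_sqrt
  linarith

/-- The adjoint of `A ↦ U * A * Wᵀ` for the Frobenius inner product is `R ↦ Uᵀ * R * W`; hence a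
matrix in the kernel of the latter is orthogonal to the range of the former. -/
lemma trace_cross_eq_zero {m n g k : ℕ} (R : Matrix (Fin m) (Fin n) ℝ)
    (U : Matrix (Fin m) (Fin g) ℝ) (W : Matrix (Fin n) (Fin k) ℝ)
    (A : Matrix (Fin g) (Fin k) ℝ) (h : Uᵀ * R * W = 0) :
    (Rᵀ * (U * A * Wᵀ)).trace = 0 := by
  have h' : Wᵀ * (Rᵀ * U) = 0 := by
    simpa [Matrix.transpose_mul] using congrArg Matrix.transpose h
  rw [← Matrix.mul_assoc, Matrix.trace_mul_comm, ← Matrix.mul_assoc, ← Matrix.mul_assoc,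
    Matrix.mul_assoc Wᵀ, h', Matrix.zero_mul, Matrix.trace_zero]

/-- The normal equation of the residual for one pair of factors; `V` and `X` are the other pair. -/
lemma normal_equation {m n g k l p : ℕ}
    (U : Matrix (Fin m) (Fin g) ℝ) (W : Matrix (Fin n) (Fin k) ℝ)
    (V : Matrix (Fin m) (Fin l) ℝ) (X : Matrix (Fin n) (Fin p) ℝ)
    (hU : Uᵀ * U = 1) (hW : Wᵀ * W = 1) (hUV : Uᵀ * V = 0)
    (Y : Matrix (Fin m) (Fin n) ℝ) (C : Matrix (Fin l) (Fin p) ℝ) :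
    Uᵀ * (Y - U * (Uᵀ * Y * W) * Wᵀ - V * C * Xᵀ) * W = 0 := by
  have h1 : Uᵀ * (U * (Uᵀ * Y * W) * Wᵀ) * W = Uᵀ * Y * W := by
    calc _ = (Uᵀ * U) * (Uᵀ * Y * W) * (Wᵀ * W) := by simp only [Matrix.mul_assoc]
      _ = _ := by rw [hU, hW, Matrix.one_mul, Matrix.mul_one]
  have h2 : Uᵀ * (V * C * Xᵀ) = 0 := by
    rw [← Matrix.mul_assoc, ← Matrix.mul_assoc, hUV, Matrix.zero_mul, Matrix.zero_mul]
  rw [Matrix.mul_sub, Matrix.mul_sub, Matrix.sub_mul, Matrix.sub_mul, h1, h2]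
  simp

/-- Proposition 2 (two-mode case): when the global and local factors are orthogonal in the
first mode, the core matrices obtained by projection minimize the reconstruction loss. -/
theorem perTucker_optimal_cores {m₁ m₂ g₁ g₂ l₁ l₂ : ℕ}
    (U₁ : Matrix (Fin m₁) (Fin g₁) ℝ) (U₂ : Matrix (Fin m₂) (Fin g₂) ℝ)
    (V₁ : Matrix (Fin m₁) (Fin l₁) ℝ) (V₂ : Matrix (Fin m₂) (Fin l₂) ℝ)
    (hU₁ : U₁ᵀ * U₁ = 1) (hU₂ : U₂ᵀ * U₂ = 1)
    (hV₁ : V₁ᵀ * V₁ = 1) (hV₂ : V₂ᵀ * V₂ = 1)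
    (hUV : U₁ᵀ * V₁ = 0) (Y : Matrix (Fin m₁) (Fin m₂) ℝ)
    (CG : Matrix (Fin g₁) (Fin g₂) ℝ) (CL : Matrix (Fin l₁) (Fin l₂) ℝ) :
    frobNorm (Y - U₁ * (U₁ᵀ * Y * U₂) * U₂ᵀ - V₁ * (V₁ᵀ * Y * V₂) * V₂ᵀ) ≤
      frobNorm (Y - U₁ * CG * U₂ᵀ - V₁ * CL * V₂ᵀ) := by
  have hVU : V₁ᵀ * U₁ = 0 := by
    simpa [Matrix.transpose_mul] using congrArg Matrix.transpose hUV
  set G := U₁ᵀ * Y * U₂ with hG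
  set L := V₁ᵀ * Y * V₂ with hL
  have hRU : U₁ᵀ * (Y - U₁ * G * U₂ᵀ - V₁ * L * V₂ᵀ) * U₂ = 0 :=
    normal_equation U₁ U₂ V₁ V₂ hU₁ hU₂ hUV Y L
  have hRV : V₁ᵀ * (Y - U₁ * G * U₂ᵀ - V₁ * L * V₂ᵀ) * V₂ = 0 := by
    rw [sub_right_comm]
    exact normal_equation V₁ V₂ U₁ U₂ hV₁ hV₂ hVU Y G
  have hS : Y - U₁ * CG * U₂ᵀ - V₁ * CL * V₂ᵀ = (Y - U₁ * G * U₂ᵀ - V₁ * L * V₂ᵀ)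
      + (U₁ * (G - CG) * U₂ᵀ + V₁ * (L - CL) * V₂ᵀ) := by
    simp only [Matrix.mul_sub, Matrix.sub_mul]
    abel
  rw [hS]
  apply frobNorm_le_of_orthogonal
  rw [Matrix.mul_add, Matrix.trace_add, trace_cross_eq_zero _ U₁ U₂ _ hRU,
    trace_cross_eq_zero _ V₁ V₂ _ hRV, add_zero]
end

section
/- Let S ∈ ℝ^{n×n} be real symmetric, let U ∈ ℝ^{n×c} satisfy UᵀU = I_c, and let V ∈ ℝ^{n×b} satisfy VᵀV = I_b and VᵀU = 0. Then Tr(Vᵀ S V) is at most the sum of the b largest eigenvalues of the symmetric matrix (I − UUᵀ) S (I − UUᵀ) (counted with multiplicity). -/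
/-!
Since `VᵀU = 0`, the projector `1 - UUᵀ` fixes the columns of `V`, so `VᵀSV = VᵀMV` with
`M = (1 - UUᵀ)S(1 - UUᵀ)`, and the claim is Ky Fan's inequality for `M`. Diagonalize
`M = Q diag(λ) Qᵀ` and put `W = QᵀV`, which again has orthonormal columns. Then
`Tr(VᵀMV) = ∑ λᵢ wᵢ`, where `wᵢ = (WWᵀ)ᵢᵢ`. As `WWᵀ` is an orthogonal projection of trace `b`, the
weights satisfy `0 ≤ wᵢ ≤ 1` and `∑ wᵢ = b` (`diag_mul_transpose_le_one`), and such a weighted sum is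
at most the largest sum of `b` of the `λᵢ` (`exists_card_eq_sum_mul_le`).
-/

open Matrix

/-- Linear optimization over the hypersimplex: a maximum of `∑ fᵢ wᵢ` over weights
`0 ≤ w ≤ 1` of total mass `b` is attained at the indicator of a `b`-element set. -/
lemma exists_card_eq_sum_mul_le {n b : ℕ} (f w : Fin n → ℝ) (h0 : ∀ i, 0 ≤ w i)
    (h1 : ∀ i, w i ≤ 1) (hs : ∑ i, w i = b) :
    ∃ T : Finset (Fin n), T.card = b ∧ ∑ i, f i * w i ≤ ∑ i ∈ T, f i := by
  have hbn : b ≤ n := by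
    have h : ∑ i, w i ≤ ∑ _i : Fin n, (1 : ℝ) := Finset.sum_le_sum fun i _ => h1 i
    rw [hs] at h
    simpa using h
  have hne : (Finset.powersetCard b (Finset.univ : Finset (Fin n))).Nonempty :=
    Finset.powersetCard_nonempty.2 (by simpa using hbn)
  obtain ⟨T, hT, hmax⟩ := Finset.exists_max_image _ (fun T => ∑ i ∈ T, f i) hne
  have hTc : T.card = b := (Finset.mem_powersetCard.1 hT).2
  refine ⟨T, hTc, ?_⟩
  -- Exchanging an element of a maximizing `T` for one outside cannot increase the sum.
  have hex : ∀ i ∈ T, ∀ j ∉ T, f j ≤ f i := by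
    intro i hi j hj
    have hj' : j ∉ T.erase i := fun h => hj (Finset.mem_of_mem_erase h)
    have h := hmax (insert j (T.erase i)) (Finset.mem_powersetCard.2
      ⟨Finset.subset_univ _, by
        rw [Finset.card_insert_of_notMem hj', Finset.card_erase_add_one hi, hTc]⟩)
    have h2 := Finset.add_sum_erase T f hi
    simp only [Finset.sum_insert hj'] at h
    linarith
  -- Hence a threshold `t` separates the values of `f` on `T` from those off `T`.
  obtain ⟨t, ht1, ht2⟩ : ∃ t, (∀ i ∈ T, t ≤ f i) ∧ ∀ j ∉ T, f j ≤ t := by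
    rcases T.eq_empty_or_nonempty with rfl | hTn
    · obtain ⟨t, ht⟩ := (Set.finite_range f).bddAbove
      exact ⟨t, by simp, fun j _ => ht ⟨j, rfl⟩⟩
    · obtain ⟨i, hi, hmin⟩ := Finset.exists_min_image T f hTn
      exact ⟨f i, hmin, hex i hi⟩
  have key : ∀ i, f i * w i ≤ (if i ∈ T then f i else 0) + t * (w i - if i ∈ T then 1 else 0) := by
    intro i
    split_ifs with hi
    · nlinarith [ht1 i hi, h1 i]
    · nlinarith [ht2 i hi, h0 i]
  have hsum := Finset.sum_le_sum fun i (_ : i ∈ Finset.univ) => key i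
  rw [Finset.sum_add_distrib, ← Finset.mul_sum, Finset.sum_sub_distrib, hs] at hsum
  simpa [hTc] using hsum

/-- The diagonal entries of the orthogonal projection `WWᵀ` are at most `1`. -/
lemma diag_mul_transpose_le_one {n b : ℕ} (W : Matrix (Fin n) (Fin b) ℝ) (hW : Wᵀ * W = 1)
    (i : Fin n) : (W * Wᵀ) i i ≤ 1 := by
  have hP : (W * Wᵀ) * (W * Wᵀ)ᵀ = W * Wᵀ := by
    rw [transpose_mul, transpose_transpose, Matrix.mul_assoc, ← Matrix.mul_assoc Wᵀ, hW,
      Matrix.one_mul]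
  generalize W * Wᵀ = P at hP ⊢
  -- `P = PPᵀ` gives `Pᵢᵢ = ∑ⱼ Pᵢⱼ² ≥ Pᵢᵢ²`.
  have h : ∑ j, P i j * P i j = P i i := by
    simpa [Matrix.mul_apply] using congrFun (congrFun hP i) i
  have h2 : P i i * P i i ≤ ∑ j, P i j * P i j :=
    Finset.single_le_sum (f := fun j => P i j * P i j) (fun j _ => mul_self_nonneg _)
      (Finset.mem_univ i)
  nlinarith

/-- Ky Fan's inequality, with the set of `b` eigenvalues given existentially. -/
lemma exists_trace_le_sum_eigenvalues {n b : ℕ} {M : Matrix (Fin n) (Fin n) ℝ}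
    (hM : M.IsHermitian) (V : Matrix (Fin n) (Fin b) ℝ) (hV : Vᵀ * V = 1) :
    ∃ T : Finset (Fin n), T.card = b ∧
      Matrix.trace (Vᵀ * M * V) ≤ ∑ i ∈ T, hM.eigenvalues i := by
  obtain ⟨Q, hQ, hspec⟩ : ∃ Q : Matrix (Fin n) (Fin n) ℝ, Q * Qᵀ = 1 ∧
      M = Q * diagonal hM.eigenvalues * Qᵀ := by
    refine ⟨hM.eigenvectorUnitary, ?_, ?_⟩
    · have h := Unitary.coe_mul_star_self hM.eigenvectorUnitary
      rwa [Unitary.coe_star, star_eq_conjTranspose,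
        conjTranspose_eq_transpose_of_trivial] at h
    · have h := hM.spectral_theorem
      rw [Unitary.conjStarAlgAut_apply, star_eq_conjTranspose,
        conjTranspose_eq_transpose_of_trivial] at h
      exact h
  generalize hM.eigenvalues = ev at hspec ⊢
  obtain ⟨W, hWdef⟩ : ∃ W, W = Qᵀ * V := ⟨_, rfl⟩
  have hW : Wᵀ * W = 1 := by
    rw [hWdef, transpose_mul, transpose_transpose, Matrix.mul_assoc, ← Matrix.mul_assoc Q, hQ,
      Matrix.one_mul, hV]
  have htr : Matrix.trace (Vᵀ * M * V) = ∑ i, ev i * (W * Wᵀ) i i := by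
    have h : Vᵀ * M * V = Wᵀ * (diagonal ev * W) := by
      rw [hspec, hWdef, transpose_mul, transpose_transpose]
      simp only [Matrix.mul_assoc]
    rw [h, Matrix.trace_mul_comm, Matrix.mul_assoc]
    simp [Matrix.trace, Matrix.diagonal_mul]
  rw [htr]
  refine exists_card_eq_sum_mul_le ev _ (fun i => ?_) (diag_mul_transpose_le_one W hW) ?_
  · simp only [Matrix.mul_apply, transpose_apply]
    exact Finset.sum_nonneg fun j _ => mul_self_nonneg _
  · change Matrix.trace (W * Wᵀ) = b
    rw [Matrix.trace_mul_comm, hW]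
    simp

/-- Lemma 4 upper bound: for real symmetric `S`, orthonormal `U`, and orthonormal `V`
with `VᵀU = 0`, `Tr(VᵀSV)` is at most the sum of the `b` largest eigenvalues of the
symmetric matrix `(I − UUᵀ)S(I − UUᵀ)`. -/
theorem trace_le_sum_top_eigenvalues_projected {n c b : ℕ}
    (S : Matrix (Fin n) (Fin n) ℝ) (hS : S.IsHermitian)
    (U : Matrix (Fin n) (Fin c) ℝ) (hU : Uᵀ * U = 1)
    (V : Matrix (Fin n) (Fin b) ℝ) (hV : Vᵀ * V = 1) (hVU : Vᵀ * U = 0)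
    (hM : ((1 - U * Uᵀ) * S * (1 - U * Uᵀ)).IsHermitian) :
    Matrix.trace (Vᵀ * S * V) ≤
      sSup {x : ℝ | ∃ T : Finset (Fin n), T.card = b ∧ x = ∑ i ∈ T, hM.eigenvalues i} := by
  have hVP : Vᵀ * (1 - U * Uᵀ) = Vᵀ := by
    rw [Matrix.mul_sub, ← Matrix.mul_assoc, hVU]
    simp
  have hPV : (1 - U * Uᵀ) * V = V := by
    have h := congrArg transpose hVP
    simpa [transpose_mul, transpose_sub] using h
  have hEq : Vᵀ * ((1 - U * Uᵀ) * S * (1 - U * Uᵀ)) * V = Vᵀ * S * V := by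
    rw [← Matrix.mul_assoc, ← Matrix.mul_assoc, hVP, Matrix.mul_assoc, hPV]
  obtain ⟨T, hT, hle⟩ := exists_trace_le_sum_eigenvalues hM V hV
  rw [hEq] at hle
  -- The set is finite, hence bounded above, so `sSup` is a genuine supremum.
  have hbdd : BddAbove {x : ℝ | ∃ T : Finset (Fin n), T.card = b ∧
      x = ∑ i ∈ T, hM.eigenvalues i} := by
    refine ((Set.finite_range fun T : Finset (Fin n) => ∑ i ∈ T, hM.eigenvalues i).subset
      ?_).bddAbove
    rintro x ⟨T, -, rfl⟩
    exact ⟨T, rfl⟩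
  exact hle.trans (le_csSup hbdd ⟨T, hT, rfl⟩)
end

section
/- Let U, W ∈ ℝ^{m×c} and V ∈ ℝ^{m×d} have orthonormal columns (UᵀU = I_c, WᵀW = I_c, VᵀV = I_d), with WᵀV = 0, and suppose ‖UUᵀ − WWᵀ‖_F ≤ √2/2. Then there exists a matrix Ṽ ∈ ℝ^{m×d} such that ṼᵀṼ = I_d, ṼᵀU = 0, and ‖ṼṼᵀ − VVᵀ‖_F ≤ 11·‖UUᵀ − WWᵀ‖_F. -/
/-!
Put `F = Uᵀ V` and `A = (1 - U Uᵀ) V`, so that `Aᵀ A = Vᵀ A = 1 - Fᵀ F`. Since `Wᵀ V = 0`, one has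
`U Uᵀ V = E V` with `E = U Uᵀ - W Wᵀ`, whence `tr (Fᵀ F) = ‖E V‖² ≤ ‖E‖² ≤ 1/2` and `S = Aᵀ A` is
positive definite. Writing `S⁻¹ = Cᵀ C`, the matrix `Ṽ = A Cᵀ` is an orthonormal basis of the range
of `A`, which is orthogonal to `U`. Finally, expanding the square,
`‖Ṽ Ṽᵀ - V Vᵀ‖² = 2 d - 2 tr (A S⁻¹ Aᵀ V Vᵀ) = 2 d - 2 tr S = 2 tr (Fᵀ F) ≤ 2 ‖E‖²`,
so the constant `√2` already suffices in place of `11`. The bound on `‖E V‖` is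
`trace_mul_isometry_le`, definiteness of `S` is `posDef_one_sub`, and the expansion is
`trace_proj_sub`.
-/

open Matrix

lemma frobNorm_sq {m n : ℕ} (A : Matrix (Fin m) (Fin n) ℝ) :
    frobNorm A ^ 2 = (Aᵀ * A).trace := by
  unfold frobNorm
  rw [Real.sq_sqrt (by positivity), Finset.sum_comm]
  simp [Matrix.trace, Matrix.mul_apply, sq]

lemma trace_transpose_mul_self_nonneg {m n : ℕ} (A : Matrix (Fin m) (Fin n) ℝ) :
    0 ≤ (Aᵀ * A).trace := by
  rw [← frobNorm_sq]; positivity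

/-- Right multiplication by a matrix with orthonormal columns does not increase the Frobenius norm;
the defect is the squared norm of `(1 - V Vᵀ) Eᵀ`. -/
lemma trace_mul_isometry_le {l m d : ℕ} (E : Matrix (Fin l) (Fin m) ℝ)
    (V : Matrix (Fin m) (Fin d) ℝ) (hV : Vᵀ * V = 1) :
    ((E * V)ᵀ * (E * V)).trace ≤ (Eᵀ * E).trace := by
  have h := trace_transpose_mul_self_nonneg ((1 - V * Vᵀ) * Eᵀ)
  have hproj : (1 - V * Vᵀ)ᵀ * (1 - V * Vᵀ) = 1 - V * Vᵀ := by
    have : V * Vᵀ * (V * Vᵀ) = V * Vᵀ := by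
      rw [Matrix.mul_assoc, ← Matrix.mul_assoc Vᵀ, hV, Matrix.one_mul]
    simp [Matrix.transpose_sub, Matrix.mul_sub, Matrix.sub_mul, this]
  have e : ((1 - V * Vᵀ) * Eᵀ)ᵀ * ((1 - V * Vᵀ) * Eᵀ) = E * Eᵀ - (E * V) * (E * V)ᵀ := by
    rw [Matrix.transpose_mul, Matrix.mul_assoc, ← Matrix.mul_assoc _ _ Eᵀ, hproj]
    simp [Matrix.mul_sub, Matrix.sub_mul, Matrix.mul_assoc]
  rw [e, Matrix.trace_sub, Matrix.trace_mul_comm E, Matrix.trace_mul_comm (E * V)] at h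
  linarith

/-- If `‖F‖_F < 1` then `1 - Fᵀ F` is positive definite, because `‖F x‖ ≤ ‖F‖_F ‖x‖`. -/
lemma posDef_one_sub {c d : ℕ} (F : Matrix (Fin c) (Fin d) ℝ) (hF : (Fᵀ * F).trace < 1) :
    (1 - Fᵀ * F).PosDef := by
  refine Matrix.PosDef.of_dotProduct_mulVec_pos ?_ fun x hx => ?_
  · simp [Matrix.IsHermitian, Matrix.conjTranspose_eq_transpose_of_trivial]
  · have h1 : star x ⬝ᵥ (1 - Fᵀ * F) *ᵥ x = x ⬝ᵥ x - (F *ᵥ x) ⬝ᵥ (F *ᵥ x) := by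
      rw [Matrix.sub_mulVec, dotProduct_sub, Matrix.one_mulVec, ← Matrix.mulVec_mulVec,
        Matrix.dotProduct_mulVec _ Fᵀ, Matrix.vecMul_transpose]
      simp
    have h2 : (F *ᵥ x) ⬝ᵥ (F *ᵥ x) ≤ (Fᵀ * F).trace * (x ⬝ᵥ x) := by
      rw [Matrix.trace_mul_comm, Matrix.trace, Finset.sum_mul]
      refine Finset.sum_le_sum fun i _ => ?_
      have := Finset.sum_mul_sq_le_sq_mul_sq Finset.univ (F i) x
      simpa [Matrix.mulVec, Matrix.mul_apply, dotProduct, sq] using this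
    have h3 : 0 < x ⬝ᵥ x := by
      simpa using Matrix.dotProduct_star_self_pos_iff.2 hx
    rw [h1]
    nlinarith

open scoped MatrixOrder in
lemma exists_transpose_mul_self {d : ℕ} {M : Matrix (Fin d) (Fin d) ℝ} (hM : M.PosSemidef) :
    ∃ C : Matrix (Fin d) (Fin d) ℝ, M = Cᵀ * C := by
  obtain ⟨C, hC⟩ := CStarAlgebra.nonneg_iff_eq_star_mul_self.mp hM.nonneg
  exact ⟨C, hC⟩

/-- Squared distance between the orthogonal projections onto two `d`-dimensional column spaces. -/
lemma trace_proj_sub {m d : ℕ} (X V : Matrix (Fin m) (Fin d) ℝ) (hX : Xᵀ * X = 1)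
    (hV : Vᵀ * V = 1) :
    ((X * Xᵀ - V * Vᵀ)ᵀ * (X * Xᵀ - V * Vᵀ)).trace = 2 * d - 2 * (X * Xᵀ * (V * Vᵀ)).trace := by
  have key : ∀ Y : Matrix (Fin m) (Fin d) ℝ, Yᵀ * Y = 1 → (Y * Yᵀ * (Y * Yᵀ)).trace = d := by
    intro Y hY
    rw [Matrix.mul_assoc, ← Matrix.mul_assoc Yᵀ, hY, Matrix.one_mul, Matrix.trace_mul_comm, hY]
    simp
  simp only [Matrix.transpose_sub, Matrix.transpose_mul, Matrix.transpose_transpose,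
    Matrix.mul_sub, Matrix.sub_mul, Matrix.trace_sub]
  rw [key X hX, key V hV, Matrix.trace_mul_comm (V * Vᵀ)]
  ring

/-- Lemma 7: a local factor `V` orthogonal to the old global factor `W` can be modified
into a nearby orthonormal matrix `Ṽ` orthogonal to the new global factor `U`, with
subspace distance controlled by the change in the global subspace. -/
theorem exists_nearby_orthogonal_local_factor {m c d : ℕ}
    (U W : Matrix (Fin m) (Fin c) ℝ) (V : Matrix (Fin m) (Fin d) ℝ)
    (hU : Uᵀ * U = 1) (hW : Wᵀ * W = 1) (hV : Vᵀ * V = 1)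
    (hWV : Wᵀ * V = 0)
    (hclose : frobNorm (U * Uᵀ - W * Wᵀ) ≤ Real.sqrt 2 / 2) :
    ∃ Vt : Matrix (Fin m) (Fin d) ℝ,
      Vtᵀ * Vt = 1 ∧ Vtᵀ * U = 0 ∧
        frobNorm (Vt * Vtᵀ - V * Vᵀ) ≤ 11 * frobNorm (U * Uᵀ - W * Wᵀ) := by
  set E := U * Uᵀ - W * Wᵀ with hE
  set F := Uᵀ * V with hF
  have hFt : Fᵀ = Vᵀ * U := by simp [hF]
  have hEV : E * V = U * F := by
    rw [hE, Matrix.sub_mul, Matrix.mul_assoc W, hWV, Matrix.mul_zero, sub_zero, Matrix.mul_assoc]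
  have hFE : (Fᵀ * F).trace ≤ frobNorm E ^ 2 := by
    have h := trace_mul_isometry_le E V hV
    rwa [hEV, Matrix.transpose_mul, Matrix.mul_assoc, ← Matrix.mul_assoc Uᵀ, hU, Matrix.one_mul,
      ← frobNorm_sq E] at h
  have hE0 : 0 ≤ frobNorm E := Real.sqrt_nonneg _
  have hE2 : frobNorm E ^ 2 ≤ 1 / 2 := by
    have h := pow_le_pow_left₀ hE0 hclose 2
    rw [div_pow, Real.sq_sqrt (by norm_num)] at h
    linarith
  have hS : (1 - Fᵀ * F).PosDef := posDef_one_sub F (by linarith)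
  set S := 1 - Fᵀ * F with hSdef
  set A := V - U * F with hA
  have hUA : Uᵀ * A = 0 := by
    rw [hA, Matrix.mul_sub, ← Matrix.mul_assoc, hU, Matrix.one_mul, sub_self]
  have hVA : Vᵀ * A = S := by
    rw [hA, Matrix.mul_sub, ← Matrix.mul_assoc, hV, ← hFt]
  have hAV : Aᵀ * V = S := by
    rw [hA, Matrix.transpose_sub, Matrix.transpose_mul, Matrix.sub_mul, hV, Matrix.mul_assoc]
  have hAA : Aᵀ * A = S := by
    have hAU : Aᵀ * U = 0 := by simpa using congrArg Matrix.transpose hUA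
    conv_lhs => rw [hA, Matrix.mul_sub, ← hA, hAV, ← Matrix.mul_assoc, hAU]
    simp
  obtain ⟨C, hC⟩ : ∃ C : Matrix (Fin d) (Fin d) ℝ, S⁻¹ = Cᵀ * C :=
    exists_transpose_mul_self hS.inv.posSemidef
  have hdet : IsUnit S.det := (Matrix.isUnit_iff_isUnit_det _).1 hS.isUnit
  -- `Cᵀ (C S) = S⁻¹ S = 1`, and one-sided inverses of square matrices are two-sided.
  have hCS : C * S * Cᵀ = 1 := by
    rw [mul_eq_one_comm, ← Matrix.mul_assoc, ← hC, Matrix.nonsing_inv_mul _ hdet]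
  have hX : (A * Cᵀ)ᵀ * (A * Cᵀ) = 1 := by
    rw [Matrix.transpose_mul, Matrix.transpose_transpose, Matrix.mul_assoc, ← Matrix.mul_assoc Aᵀ,
      hAA, ← Matrix.mul_assoc, hCS]
  refine ⟨A * Cᵀ, hX, ?_, ?_⟩
  · have h : Uᵀ * (A * Cᵀ) = 0 := by rw [← Matrix.mul_assoc, hUA, Matrix.zero_mul]
    simpa using congrArg Matrix.transpose h
  · have htr : (A * Cᵀ * (A * Cᵀ)ᵀ * (V * Vᵀ)).trace = d - (Fᵀ * F).trace := by
      have h : A * Cᵀ * (A * Cᵀ)ᵀ * (V * Vᵀ) = A * (S⁻¹ * (Aᵀ * V)) * Vᵀ := by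
        rw [hC]; simp [Matrix.mul_assoc]
      rw [h, hAV, Matrix.nonsing_inv_mul _ hdet, Matrix.mul_one, Matrix.trace_mul_comm, hVA, hSdef,
        Matrix.trace_sub]
      simp
    have hd := trace_proj_sub _ V hX hV
    rw [htr, ← frobNorm_sq] at hd
    refine (sq_le_sq₀ (Real.sqrt_nonneg _) (by positivity)).1 ?_
    change frobNorm _ ^ 2 ≤ _
    nlinarith [sq_nonneg (frobNorm E)]
end

section
/- Let U, W ∈ ℝ^{m×c} and V ∈ ℝ^{m×d} have orthonormal columns (UᵀU = I_c, WᵀW = I_c, VᵀV = I_d), and suppose WᵀV = 0. Then ‖UᵀV‖_F ≤ ‖UUᵀ − WWᵀ‖_F. -/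
/-!
Put `A = UUᵀ - WWᵀ`. Since `WᵀV = 0`, `AV = U(UᵀV)`, and multiplying on the left by `U`, whose
columns are orthonormal, preserves the Frobenius norm (`frobNorm_isometry_mul`); hence
`‖UᵀV‖ = ‖AV‖`. Multiplying on the right by `V`, whose columns are orthonormal, does not increase
the Frobenius norm (`frobNorm_mul_isometry_le`), so `‖AV‖ ≤ ‖A‖`.
-/

open Matrix

theorem sum_sq_eq_trace {m n : ℕ} (A : Matrix (Fin m) (Fin n) ℝ) :
    ∑ i, ∑ j, (A i j) ^ 2 = (A * Aᵀ).trace := by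
  simp [Matrix.trace, Matrix.mul_apply, sq]

theorem frobNorm_eq_sqrt_trace {m n : ℕ} (A : Matrix (Fin m) (Fin n) ℝ) :
    frobNorm A = Real.sqrt (A * Aᵀ).trace := by
  rw [frobNorm, sum_sq_eq_trace]

theorem frobNorm_isometry_mul {m c d : ℕ} (U : Matrix (Fin m) (Fin c) ℝ)
    (B : Matrix (Fin c) (Fin d) ℝ) (hU : Uᵀ * U = 1) : frobNorm (U * B) = frobNorm B := by
  rw [frobNorm_eq_sqrt_trace, frobNorm_eq_sqrt_trace, Matrix.trace_mul_comm,
    Matrix.trace_mul_comm B, Matrix.transpose_mul, Matrix.mul_assoc, ← Matrix.mul_assoc Uᵀ, hU,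
    Matrix.one_mul]

/-- The reason is Pythagoras for the orthogonal projection `VVᵀ`:
`‖A‖² - ‖AV‖² = ‖A - AVVᵀ‖² ≥ 0`. -/
theorem frobNorm_mul_isometry_le {k m d : ℕ} (A : Matrix (Fin k) (Fin m) ℝ)
    (V : Matrix (Fin m) (Fin d) ℝ) (hV : Vᵀ * V = 1) : frobNorm (A * V) ≤ frobNorm A := by
  rw [frobNorm_eq_sqrt_trace, frobNorm_eq_sqrt_trace]
  apply Real.sqrt_le_sqrt
  have hpos : 0 ≤ ((A - A * V * Vᵀ) * (A - A * V * Vᵀ)ᵀ).trace := by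
    rw [← sum_sq_eq_trace]
    positivity
  have hP : A * V * Vᵀ * (A * V * Vᵀ)ᵀ = A * V * (A * V)ᵀ := by
    simp only [Matrix.transpose_mul, Matrix.transpose_transpose, Matrix.mul_assoc]
    rw [← Matrix.mul_assoc Vᵀ V, hV, Matrix.one_mul]
  have hexp : (A - A * V * Vᵀ) * (A - A * V * Vᵀ)ᵀ = A * Aᵀ - A * V * (A * V)ᵀ := by
    rw [Matrix.transpose_sub, Matrix.sub_mul, Matrix.mul_sub, Matrix.mul_sub, hP]
    simp [Matrix.transpose_mul, Matrix.mul_assoc]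
  rw [hexp, Matrix.trace_sub] at hpos
  linarith

/-- Intermediate claim in Lemma 7: the overlap between the new global factor `U` and a
local factor `V` orthogonal to the old global factor `W` is bounded by the subspace change. -/
theorem overlap_le_subspace_change {m c d : ℕ}
    (U W : Matrix (Fin m) (Fin c) ℝ) (V : Matrix (Fin m) (Fin d) ℝ)
    (hU : Uᵀ * U = 1) (hW : Wᵀ * W = 1) (hV : Vᵀ * V = 1)
    (hWV : Wᵀ * V = 0) :
    frobNorm (Uᵀ * V) ≤ frobNorm (U * Uᵀ - W * Wᵀ) := by
  have hAV : (U * Uᵀ - W * Wᵀ) * V = U * (Uᵀ * V) := by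
    rw [Matrix.sub_mul, Matrix.mul_assoc, Matrix.mul_assoc, hWV, Matrix.mul_zero, sub_zero]
  rw [← frobNorm_isometry_mul U _ hU, ← hAV]
  exact frobNorm_mul_isometry_le _ V hV
end
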